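/- arXiv:1406.5158 — 2 statements merged into one kernel-verified Lean document; each statement's English description precedes it below -/
import Mathlib

section
/- Let q, z be complex numbers with 0 < |q| < 1 and z ≠ 0. Then ∏_{i=0}^{∞} (1 − q^{4i+4})(1 + z q^{4i+3})(1 + z^{−1} q^{4i+1}) = ∑_{m∈ℤ} z^m q^{m(2m+1)}, where the infinite product converges and the series on the right converges absolutely. (This is the Jacobi identity ∏_{i≥1}(1−q^{2i})(1+zq^{2i−1/2})(1+z^{−1}q^{2i−3/2}) = ∑_{m∈ℤ} z^m q^{m(2m+1)/2} obtained from the two graded dimension formulas for F^{⊗1/2}, with q replaced by q² to avoid half-integer exponents.) -/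
/-!
The proof passes to the limit in MacMahon's finite form of the Jacobi triple product,
`(-wq; q²)_m (-w⁻¹q; q²)_n = ∑_k [m + n, n + k] w^k q^(k²)`, where the brackets are Gaussian
binomial coefficients to the base `q²`. Increasing `m` or `n` by one multiplies the product by a
single factor, which turns the identity into one of the two `q`-Pascal rules. For `m = n → ∞` the
coefficients are uniformly bounded and converge to `1 / (q²; q²)_∞`, so dominated convergence gives
the triple product; the substitution `q ↦ q²`, `w ↦ zq` then yields the theorem.
-/

open Filter Topology

section Algebra

/-- The finite `q`-Pochhammer symbol `(a; q)_n`, through which the partial products of the triple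
product and the Gaussian binomial coefficients are expressed. -/
def qPochhammer {R : Type*} [CommRing R] (a q : R) (n : ℕ) : R :=
  ∏ i ∈ Finset.range n, (1 - a * q ^ i)

theorem qPochhammer_succ {R : Type*} [CommRing R] (a q : R) (n : ℕ) :
    qPochhammer a q (n + 1) = qPochhammer a q n * (1 - a * q ^ n) :=
  Finset.prod_range_succ _ n

variable {𝕜 : Type*} [Field 𝕜]

/-- The reciprocal `1 / (p; p)_k`, with the usual convention that it vanishes for `k < 0`; this
makes its recurrence, and hence the `q`-Pascal rules, valid without boundary cases. -/
def invQPochhammer (p : 𝕜) : ℤ → 𝕜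
  | .ofNat n => (qPochhammer p p n)⁻¹
  | .negSucc _ => 0

/-- The Gaussian binomial coefficient `[N, k]` to the base `p`, zero unless `0 ≤ k ≤ N`. The formula
is meaningful only if no `p ^ i` with `0 < i` equals `1`. -/
def gaussBinom (p : 𝕜) (N : ℕ) (k : ℤ) : 𝕜 :=
  qPochhammer p p N * (invQPochhammer p k * invQPochhammer p (N - k))

/-- The general term of the two-sided theta series on the sum side of the triple product. -/
def thetaTerm (w q : 𝕜) (k : ℤ) : 𝕜 :=
  w ^ k * q ^ (k ^ 2)

theorem invQPochhammer_natCast (p : 𝕜) (n : ℕ) :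
    invQPochhammer p n = (qPochhammer p p n)⁻¹ :=
  rfl

theorem invQPochhammer_of_neg (p : 𝕜) {k : ℤ} (hk : k < 0) : invQPochhammer p k = 0 := by
  obtain ⟨n, rfl⟩ := Int.eq_negSucc_of_lt_zero hk
  rfl

theorem one_sub_mul_pow_self_ne_zero {p : 𝕜} (hp : ¬IsOfFinOrder p) (i : ℕ) :
    1 - p * p ^ i ≠ 0 := fun h ↦
  hp <| isOfFinOrder_iff_pow_eq_one.mpr
    ⟨i + 1, i.succ_pos, by rw [pow_succ', ← sub_eq_zero.mp h]⟩

theorem invQPochhammer_sub_one {p : 𝕜} (hp : ¬IsOfFinOrder p) (k : ℤ) :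
    invQPochhammer p (k - 1) = (1 - p ^ k) * invQPochhammer p k := by
  rcases lt_trichotomy k 0 with hneg | rfl | hpos
  · simp [invQPochhammer_of_neg, hneg, hneg.trans]
  · simp [invQPochhammer_of_neg]
  · obtain ⟨n, rfl⟩ : ∃ n : ℕ, k = (n + 1 : ℕ) := ⟨(k - 1).toNat, by omega⟩
    have hfactor : 1 - p * p ^ n ≠ 0 := one_sub_mul_pow_self_ne_zero hp n
    rw [Nat.cast_succ, add_sub_cancel_right, ← Nat.cast_succ, zpow_natCast,
      invQPochhammer_natCast, invQPochhammer_natCast, qPochhammer_succ, pow_succ', mul_inv,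
      mul_left_comm, mul_inv_cancel₀ hfactor, mul_one]

theorem gaussBinom_zero_left (p : 𝕜) (k : ℤ) : gaussBinom p 0 k = if k = 0 then 1 else 0 := by
  rcases lt_trichotomy k 0 with hneg | rfl | hpos
  · simp [gaussBinom, invQPochhammer_of_neg, hneg, hneg.ne]
  · simp [gaussBinom, invQPochhammer, qPochhammer]
  · simp [gaussBinom, invQPochhammer_of_neg, hpos, hpos.ne']

theorem gaussBinom_sub (p : 𝕜) (N : ℕ) (k : ℤ) : gaussBinom p N (N - k) = gaussBinom p N k := by
  rw [gaussBinom, gaussBinom, sub_sub_cancel, mul_comm (invQPochhammer p k)]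

theorem gaussBinom_succ {p : 𝕜} (hp0 : p ≠ 0) (hp : ¬IsOfFinOrder p) (N : ℕ) (k : ℤ) :
    gaussBinom p (N + 1) k =
      gaussBinom p N k + p ^ (N + 1 - k) * gaussBinom p N (k - 1) := by
  have hpow : p ^ (N + 1 - k) * p ^ k = p * p ^ N := by
    rw [← zpow_add₀ hp0, sub_add_cancel, zpow_add_one₀ hp0, zpow_natCast, mul_comm]
  have hcompl : (N : ℤ) - k = N + 1 - k - 1 := by ring
  have hcompl' : (N : ℤ) - (k - 1) = N + 1 - k := by ring
  simp only [gaussBinom, qPochhammer_succ, Nat.cast_succ, hcompl, hcompl',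
    invQPochhammer_sub_one hp, ← hpow]
  ring

theorem gaussBinom_succ' {p : 𝕜} (hp0 : p ≠ 0) (hp : ¬IsOfFinOrder p) (N : ℕ) (k : ℤ) :
    gaussBinom p (N + 1) k = gaussBinom p N (k - 1) + p ^ k * gaussBinom p N k := by
  have hpascal := gaussBinom_succ hp0 hp N ((N + 1 : ℕ) - k)
  rw [gaussBinom_sub, ← gaussBinom_sub p N, ← gaussBinom_sub p N ((N + 1 : ℕ) - k - 1)] at hpascal
  convert hpascal using 3 <;> push_cast <;> ring_nf

theorem thetaTerm_inv_neg (w q : 𝕜) (k : ℤ) : thetaTerm w⁻¹ q (-k) = thetaTerm w q k := by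
  simp [thetaTerm]

theorem thetaTerm_sub_one_mul {w q : 𝕜} (hw : w ≠ 0) (hq : q ≠ 0) (k : ℤ) (n : ℕ) :
    thetaTerm w q (k - 1) * (w * q * (q ^ 2) ^ n) = (q ^ 2) ^ (n + 1 - k) * thetaTerm w q k := by
  have hwpow : w ^ (k - 1) * w = w ^ k := by rw [← zpow_add_one₀ hw, sub_add_cancel]
  have hqpow : q ^ ((k - 1) ^ 2) * (q * (q ^ 2) ^ n) = (q ^ 2) ^ (n + 1 - k) * q ^ (k ^ 2) := by
    simp only [← zpow_natCast, ← zpow_mul, ← zpow_add₀ hq, ← zpow_one_add₀ hq]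
    congr 1
    push_cast
    ring
  calc thetaTerm w q (k - 1) * (w * q * (q ^ 2) ^ n)
      = (w ^ (k - 1) * w) * (q ^ ((k - 1) ^ 2) * (q * (q ^ 2) ^ n)) := by rw [thetaTerm]; ring
    _ = (q ^ 2) ^ (n + 1 - k) * thetaTerm w q k := by rw [hwpow, hqpow, thetaTerm]; ring

theorem thetaTerm_add_one_mul {w q : 𝕜} (hw : w ≠ 0) (hq : q ≠ 0) (k : ℤ) (n : ℕ) :
    thetaTerm w q (k + 1) * (w⁻¹ * q * (q ^ 2) ^ n) = (q ^ 2) ^ (n + 1 + k) * thetaTerm w q k := by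
  have h := thetaTerm_sub_one_mul (inv_ne_zero hw) hq (-k) n
  rwa [← neg_add', thetaTerm_inv_neg, thetaTerm_inv_neg, sub_neg_eq_add] at h

variable [TopologicalSpace 𝕜] [IsTopologicalSemiring 𝕜]

theorem hasSum_gaussBinom_mul_thetaTerm {w q : 𝕜} (hw : w ≠ 0) (hq0 : q ≠ 0)
    (hq : ¬IsOfFinOrder (q ^ 2)) (m n : ℕ) :
    HasSum (fun k : ℤ ↦ gaussBinom (q ^ 2) (m + n) (n + k) * thetaTerm w q k)
      (qPochhammer (-(w * q)) (q ^ 2) m * qPochhammer (-(w⁻¹ * q)) (q ^ 2) n) := by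
  have hq2 : q ^ 2 ≠ 0 := pow_ne_zero 2 hq0
  induction n with
  | zero =>
    induction m with
    | zero =>
      convert hasSum_ite_eq (0 : ℤ) (1 : 𝕜) using 2 with k
      · rcases eq_or_ne k 0 with rfl | hk <;> simp [gaussBinom_zero_left, thetaTerm, *]
      · simp [qPochhammer]
    | succ m ih =>
      have hshift := ((Equiv.subRight (1 : ℤ)).hasSum_iff.mpr ih).mul_right (w * q * (q ^ 2) ^ m)
      convert ih.add hshift using 1
      · funext k
        simp only [Function.comp_apply, Equiv.subRight_apply]
        rw [mul_assoc (gaussBinom _ _ _), thetaTerm_sub_one_mul hw hq0, add_right_comm m 1 0,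
          gaussBinom_succ hq2 hq]
        push_cast
        ring_nf
      · rw [qPochhammer_succ]
        ring
  | succ n ih =>
    have hshift := ((Equiv.addRight (1 : ℤ)).hasSum_iff.mpr ih).mul_right (w⁻¹ * q * (q ^ 2) ^ n)
    convert ih.add hshift using 1
    · funext k
      simp only [Function.comp_apply, Equiv.coe_addRight]
      rw [mul_assoc (gaussBinom _ _ _), thetaTerm_add_one_mul hw hq0, ← add_assoc m n 1,
        gaussBinom_succ' hq2 hq]
      push_cast
      ring_nf
    · rw [qPochhammer_succ]
      ring

end Algebra

section Analysis

variable {𝕜 : Type*} [NormedField 𝕜]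

/-- The infinite `q`-Pochhammer symbol `(a; q)_∞`, the limit of `qPochhammer a q` for `‖q‖ < 1`. -/
noncomputable def qPochhammerInf (a q : 𝕜) : 𝕜 :=
  ∏' i : ℕ, (1 - a * q ^ i)

theorem norm_pow_lt_one {p : 𝕜} (hp : ‖p‖ < 1) {n : ℕ} (hn : n ≠ 0) : ‖p ^ n‖ < 1 := by
  simpa only [norm_pow] using pow_lt_one₀ (norm_nonneg p) hp hn

theorem not_isOfFinOrder_of_norm_lt_one {p : 𝕜} (hp : ‖p‖ < 1) : ¬IsOfFinOrder p :=
  fun h ↦ hp.ne h.norm_eq_one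

theorem summable_norm_neg_mul_pow (a : 𝕜) {q : 𝕜} (hq : ‖q‖ < 1) :
    Summable fun i : ℕ ↦ ‖-(a * q ^ i)‖ := by
  simpa using (summable_geometric_of_lt_one (norm_nonneg q) hq).mul_left ‖a‖

theorem summable_norm_pow_mul_pow_sq (w : 𝕜) {q : 𝕜} (hq : ‖q‖ < 1) :
    Summable fun n : ℕ ↦ ‖w ^ n * q ^ (n ^ 2)‖ := by
  have hratio : Tendsto (fun n : ℕ ↦ ‖w * q ^ (2 * n + 1)‖) atTop (𝓝 0) := by
    have hindex : Tendsto (fun n : ℕ ↦ 2 * n + 1) atTop atTop :=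
      tendsto_atTop_mono (fun n ↦ by rw [id]; omega) tendsto_id
    simpa using (((tendsto_pow_atTop_nhds_zero_of_norm_lt_one hq).comp hindex).const_mul w).norm
  refine summable_of_ratio_norm_eventually_le one_half_lt_one ?_
  filter_upwards [hratio.eventually_le_const one_half_pos] with n hn
  calc ‖‖w ^ (n + 1) * q ^ ((n + 1) ^ 2)‖‖
      = ‖w * q ^ (2 * n + 1)‖ * ‖‖w ^ n * q ^ (n ^ 2)‖‖ := by
        rw [norm_norm, norm_norm, ← norm_mul]
        ring_nf
    _ ≤ 1 / 2 * ‖‖w ^ n * q ^ (n ^ 2)‖‖ := by gcongr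

theorem summable_norm_thetaTerm (w : 𝕜) {q : 𝕜} (hq : ‖q‖ < 1) :
    Summable fun k : ℤ ↦ ‖thetaTerm w q k‖ := by
  have hnat (v : 𝕜) : Summable fun n : ℕ ↦ ‖thetaTerm v q n‖ := by
    simpa only [thetaTerm, zpow_natCast, ← Nat.cast_pow] using summable_norm_pow_mul_pow_sq v hq
  refine Summable.of_nat_of_neg (hnat w) ((hnat w⁻¹).congr fun n ↦ ?_)
  rw [← thetaTerm_inv_neg, inv_inv]

variable [CompleteSpace 𝕜]

theorem multipliable_one_sub_mul_pow (a : 𝕜) {q : 𝕜} (hq : ‖q‖ < 1) :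
    Multipliable fun i : ℕ ↦ 1 - a * q ^ i := by
  simpa only [← sub_eq_add_neg] using
    multipliable_one_add_of_summable (summable_norm_neg_mul_pow a hq)

theorem tendsto_qPochhammer (a : 𝕜) {q : 𝕜} (hq : ‖q‖ < 1) :
    Tendsto (qPochhammer a q) atTop (𝓝 (qPochhammerInf a q)) :=
  (multipliable_one_sub_mul_pow a hq).hasProd.tendsto_prod_nat

theorem qPochhammerInf_self_ne_zero {p : 𝕜} (hp : ‖p‖ < 1) : qPochhammerInf p p ≠ 0 := by
  have hfactor (i : ℕ) : 1 + -(p * p ^ i) ≠ 0 := by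
    rw [← sub_eq_add_neg]
    exact one_sub_mul_pow_self_ne_zero (not_isOfFinOrder_of_norm_lt_one hp) i
  simpa only [qPochhammerInf, sub_eq_add_neg] using
    tprod_one_add_ne_zero_of_summable hfactor (summable_norm_neg_mul_pow p hp)

theorem tendsto_invQPochhammer {p : 𝕜} (hp : ‖p‖ < 1) :
    Tendsto (invQPochhammer p) atTop (𝓝 (qPochhammerInf p p)⁻¹) := by
  rw [← Nat.map_cast_int_atTop, tendsto_map'_iff]
  exact (tendsto_qPochhammer p hp).inv₀ (qPochhammerInf_self_ne_zero hp)

theorem tendsto_gaussBinom_central {p : 𝕜} (hp : ‖p‖ < 1) (k : ℤ) :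
    Tendsto (fun n : ℕ ↦ gaussBinom p (n + n) (n + k)) atTop (𝓝 (qPochhammerInf p p)⁻¹) := by
  have hnum : Tendsto (fun n : ℕ ↦ qPochhammer p p (n + n)) atTop (𝓝 (qPochhammerInf p p)) :=
    (tendsto_qPochhammer p hp).comp (tendsto_id.atTop_add_atTop tendsto_id)
  have hden (l : ℤ) :
      Tendsto (fun n : ℕ ↦ invQPochhammer p (n + l)) atTop (𝓝 (qPochhammerInf p p)⁻¹) :=
    (tendsto_invQPochhammer hp).comp (tendsto_atTop_add_const_right _ l tendsto_natCast_atTop_atTop)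
  convert hnum.mul ((hden k).mul (hden (-k))) using 2 with n
  · rw [gaussBinom]
    push_cast
    ring_nf
  · rw [mul_inv_cancel_left₀ (qPochhammerInf_self_ne_zero hp)]

theorem exists_norm_invQPochhammer_le {p : 𝕜} (hp : ‖p‖ < 1) :
    ∃ C, ∀ k, ‖invQPochhammer p k‖ ≤ C := by
  have hlim := (tendsto_qPochhammer p hp).inv₀ (qPochhammerInf_self_ne_zero hp)
  obtain ⟨C, hC⟩ := (Metric.isBounded_range_of_tendsto _ hlim).exists_norm_le
  refine ⟨C, fun
    | .ofNat n => hC _ ⟨n, rfl⟩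
    | .negSucc _ => ?_⟩
  simpa [invQPochhammer] using (norm_nonneg _).trans (hC _ ⟨0, rfl⟩)

theorem exists_norm_gaussBinom_le {p : 𝕜} (hp : ‖p‖ < 1) :
    ∃ C, ∀ N k, ‖gaussBinom p N k‖ ≤ C := by
  obtain ⟨A, hA⟩ := (Metric.isBounded_range_of_tendsto _ (tendsto_qPochhammer p hp)).exists_norm_le
  obtain ⟨B, hB⟩ := exists_norm_invQPochhammer_le hp
  have hA0 : 0 ≤ A := (norm_nonneg _).trans (hA _ ⟨0, rfl⟩)
  have hB0 : 0 ≤ B := (norm_nonneg _).trans (hB 0)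
  refine ⟨A * (B * B), fun N k ↦ ?_⟩
  rw [gaussBinom, norm_mul, norm_mul]
  gcongr
  exacts [hA _ ⟨N, rfl⟩, hB _, hB _]

theorem jacobi_triple_product {w q : 𝕜} (hw : w ≠ 0) (hq0 : q ≠ 0) (hq : ‖q‖ < 1) :
    qPochhammerInf (q ^ 2) (q ^ 2) * qPochhammerInf (-(w * q)) (q ^ 2) *
      qPochhammerInf (-(w⁻¹ * q)) (q ^ 2) = ∑' k : ℤ, thetaTerm w q k := by
  have hq2 : ‖q ^ 2‖ < 1 := norm_pow_lt_one hq two_ne_zero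
  have hprod := (tendsto_qPochhammer (-(w * q)) hq2).mul (tendsto_qPochhammer (-(w⁻¹ * q)) hq2)
  have hsum : Tendsto
      (fun n : ℕ ↦ ∑' k : ℤ, gaussBinom (q ^ 2) (n + n) (n + k) * thetaTerm w q k) atTop
      (𝓝 (∑' k : ℤ, (qPochhammerInf (q ^ 2) (q ^ 2))⁻¹ * thetaTerm w q k)) := by
    obtain ⟨C, hC⟩ := exists_norm_gaussBinom_le hq2
    refine tendsto_tsum_of_dominated_convergence ((summable_norm_thetaTerm w hq).mul_left C)
      (fun k ↦ (tendsto_gaussBinom_central hq2 k).mul_const _) (.of_forall fun n k ↦ ?_)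
    rw [norm_mul]
    gcongr
    exact hC _ _
  have hfinite (n : ℕ) := hasSum_gaussBinom_mul_thetaTerm hw hq0
    (not_isOfFinOrder_of_norm_lt_one hq2) n n
  have hlimit := tendsto_nhds_unique hprod (hsum.congr fun n ↦ (hfinite n).tsum_eq)
  rw [mul_assoc, hlimit, tsum_mul_left, mul_inv_cancel_left₀ (qPochhammerInf_self_ne_zero hq2)]

theorem jacobi_identity_general {q z : 𝕜} (hq0 : q ≠ 0) (hq : ‖q‖ < 1) (hz : z ≠ 0) :
    Multipliable
      (fun i : ℕ ↦ (1 - q ^ (4 * i + 4)) * (1 + z * q ^ (4 * i + 3)) *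
        (1 + z⁻¹ * q ^ (4 * i + 1))) ∧
    Summable (fun m : ℤ ↦ ‖z ^ m * q ^ (m * (2 * m + 1))‖) ∧
    ∏' i : ℕ, (1 - q ^ (4 * i + 4)) * (1 + z * q ^ (4 * i + 3)) * (1 + z⁻¹ * q ^ (4 * i + 1))
      = ∑' m : ℤ, z ^ m * q ^ (m * (2 * m + 1)) := by
  have hq2 : ‖q ^ 2‖ < 1 := norm_pow_lt_one hq two_ne_zero
  have hq4 : ‖(q ^ 2) ^ 2‖ < 1 := norm_pow_lt_one hq2 two_ne_zero
  have hfactor (i : ℕ) :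
      (1 - q ^ (4 * i + 4)) * (1 + z * q ^ (4 * i + 3)) * (1 + z⁻¹ * q ^ (4 * i + 1)) =
        (1 - (q ^ 2) ^ 2 * ((q ^ 2) ^ 2) ^ i) * (1 - -(z * q * q ^ 2) * ((q ^ 2) ^ 2) ^ i) *
          (1 - -((z * q)⁻¹ * q ^ 2) * ((q ^ 2) ^ 2) ^ i) := by
    have hinv : (z * q)⁻¹ * q ^ 2 = z⁻¹ * q := by field_simp
    rw [hinv]
    ring
  have hterm (m : ℤ) : z ^ m * q ^ (m * (2 * m + 1)) = thetaTerm (z * q) (q ^ 2) m := by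
    rw [thetaTerm, mul_zpow, mul_assoc, ← zpow_natCast q 2, ← zpow_mul, ← zpow_add₀ hq0]
    congr 2
    push_cast
    ring
  simp only [hfactor, hterm]
  have hmult (a : 𝕜) := multipliable_one_sub_mul_pow a hq4
  refine ⟨((hmult _).mul (hmult _)).mul (hmult _), summable_norm_thetaTerm _ hq2, ?_⟩
  rw [((hmult _).mul (hmult _)).tprod_mul (hmult _), (hmult _).tprod_mul (hmult _)]
  exact jacobi_triple_product (mul_ne_zero hz hq0) (pow_ne_zero 2 hq0) hq2

end Analysis

/-- The Jacobi identity obtained from the two graded dimension formulas for `F^{⊗1/2}`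
(with `q` replaced by `q²` to avoid half-integer exponents): for `0 < |q| < 1`, `z ≠ 0`,
`∏_{i=0}^∞ (1 − q^{4i+4})(1 + z q^{4i+3})(1 + z⁻¹ q^{4i+1}) = ∑_{m∈ℤ} z^m q^{m(2m+1)}`,
with the infinite product convergent and the series absolutely convergent. -/
theorem jacobi_identity (q z : ℂ) (hq0 : 0 < ‖q‖) (hq1 : ‖q‖ < 1) (hz : z ≠ 0) :
    Multipliable
      (fun i : ℕ => (1 - q ^ (4 * i + 4)) * (1 + z * q ^ (4 * i + 3)) *
        (1 + z⁻¹ * q ^ (4 * i + 1))) ∧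
    Summable (fun m : ℤ => ‖z ^ m * q ^ (m * (2 * m + 1))‖) ∧
    ∏' i : ℕ, (1 - q ^ (4 * i + 4)) * (1 + z * q ^ (4 * i + 3)) * (1 + z⁻¹ * q ^ (4 * i + 1))
      = ∑' m : ℤ, z ^ m * q ^ (m * (2 * m + 1)) :=
  jacobi_identity_general (norm_pos_iff.mp hq0) hq1 hz
end

section
/- The operators L¹_n on the neutral fermion Fock space F satisfy the Virasoro relations with central charge 1: for all m, n ∈ ℤ, L¹_m ∘ L¹_n − L¹_n ∘ L¹_m = (m−n) L¹_{m+n} + δ_{m,−n} · ((m³−m)/12) · id_F. (These are the modes of the 2-point-local Virasoro field L¹(z²) = (1/2z²):h^D(z)h^D(z): of central charge 1 on F^{⊗1/2}.) -/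
noncomputable section

/-- The neutral fermion Fock space `F = F^{⊗1/2}`: the complex vector space with
basis `{e_S : S a finite subset of ℕ}`. -/
abbrev FockD : Type := Finset ℕ →₀ ℂ

/-- Basis vector `e_S`. -/
def eD (S : Finset ℕ) : FockD := Finsupp.single S 1

/-- Action of the fermion mode `a_m` on the basis vector `e_S`. -/
def aVec (m : ℤ) (S : Finset ℕ) : FockD :=
  if 0 ≤ m then
    if m.toNat ∈ S then 0
    else ((-1 : ℂ) ^ (S.filter (fun s => m.toNat < s)).card) • eD (insert m.toNat S)
  else
    if (-m - 1).toNat ∈ S then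
      ((-1 : ℂ) ^ (S.filter (fun s => (-m - 1).toNat < s)).card) • eD (S.erase ((-m - 1).toNat))
    else 0

/-- The fermion mode `a_m` as a linear operator on `F`. -/
def aOp (m : ℤ) : FockD →ₗ[ℂ] FockD :=
  Finsupp.lsum ℂ fun S => LinearMap.toSpanSingleton ℂ FockD (aVec m S)

/-- Fermionic normal ordered product `:a_i a_j:`. -/
def NO (i j : ℤ) : FockD →ₗ[ℂ] FockD :=
  if 0 ≤ i then (aOp i).comp (aOp j) else -((aOp j).comp (aOp i))

/-- Heisenberg operator `h_n = (1/2) ∑_{i∈ℤ} (−1)^{i+1} :a_i a_{−2n−1−i}:`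
(on each vector only finitely many summands are nonzero). -/
def hD (n : ℤ) (x : FockD) : FockD :=
  (1 / 2 : ℂ) • ∑ᶠ i : ℤ, ((-1 : ℂ) ^ (i + 1)) • NO i (-2 * n - 1 - i) x

/-- Virasoro operator `L^{1/2}_m = (1/2) ∑_{i∈ℤ} i · :a_i a_{−m−i−1}:`. -/
def LhalfD (m : ℤ) (x : FockD) : FockD :=
  (1 / 2 : ℂ) • ∑ᶠ i : ℤ, (i : ℂ) • NO i (-m - i - 1) x

/-- 2-point Virasoro operator `L¹_n = (1/2) ∑_{j∈ℤ} :h_j h_{n−j}:`, where the bosonic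
normal ordered product is `:h_j h_k: = h_j h_k` if `j ≤ k` and `h_k h_j` otherwise. -/
def L1D (n : ℤ) (x : FockD) : FockD :=
  (1 / 2 : ℂ) • ∑ᶠ j : ℤ, if j ≤ n - j then hD j (hD (n - j) x) else hD (n - j) (hD j x)

/-- Charge `c(S) = #{s ∈ S : s odd} − #{s ∈ S : s even}`. -/
def chg (S : Finset ℕ) : ℤ :=
  ((S.filter fun s => Odd s).card : ℤ) - ((S.filter fun s => Even s).card : ℤ)

/-- Charge-`n` component `F_{(n)}`: the span of the `e_S` with `c(S) = n`. -/
def FockComp (n : ℤ) : Submodule ℂ FockD :=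
  Submodule.span ℂ {x : FockD | ∃ S : Finset ℕ, chg S = n ∧ x = eD S}

/-- Index set of the vacuum-like vector `v_n`. -/
def vSet (n : ℤ) : Finset ℕ :=
  if 0 ≤ n then (Finset.range n.toNat).image fun i => 2 * i + 1
  else (Finset.range (-n).toNat).image fun i => 2 * i

/-- Vacuum-like vector `v_n` (`v_0 = e_∅`, `v_n = e_{{1,3,…,2n−1}}`,
`v_{−n} = e_{{0,2,…,2n−2}}` for `n > 0`). -/
def vD (n : ℤ) : FockD := eD (vSet n)


/-!
The only relations that matter are the brackets of a quadratic operator with the linear ones it is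
built from: `[h_n, a_k] = (-1)^(k+1) a_{k-2n}` and `[L_n, h_k] = -k h_{n+k}`. The bracket of `h_m`
(resp. `L_m`) with a product is then a combination of two products with shifted indices. After a
translation of the summation index these shifted products give nothing for `h` and
`(m - n) L_{m+n}` for `L`, provided that each of them is first put back into normal order, since
only normally ordered series converge and can be reindexed. Restoring the order costs finitely many
scalars, whose sums are twice the central terms: a sum of `2m` ones for `h`, and for `L` the sum
`∑_{0 ≤ t < m} t (m - t) = (m^3 - m) / 6`.
-/

open Filter

attribute [local instance] LieRing.ofAssociativeRing

section PointwiseSum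

variable {ι κ R V W : Type*} [CommRing R] [AddCommGroup V] [Module R V] [AddCommGroup W]
  [Module R W]

/-- The family `T` of linear maps is locally finite, with sum `S`: on each vector only finitely
many `T i` are nonzero, and their values add up to the value of `S`. This is the sense in which the
infinite sums of operators defining vertex operator modes converge. -/
def HasPointwiseSum (T : ι → V →ₗ[R] W) (S : V →ₗ[R] W) : Prop :=
  ∀ x, (Function.support fun i => T i x).Finite ∧ ∑ᶠ i, T i x = S x

open Classical in
/-- The sum of a locally finite family of linear maps, and `0` if the family is not locally finite
(the convention of `finsum`). -/
def pointwiseSum (T : ι → V →ₗ[R] W) : V →ₗ[R] W :=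
  if h : ∃ S, HasPointwiseSum T S then h.choose else 0

theorem hasPointwiseSum_pointwiseSum {T : ι → V →ₗ[R] W}
    (hT : ∀ x, (Function.support fun i => T i x).Finite) :
    HasPointwiseSum T (pointwiseSum T) := by
  have h : ∃ S, HasPointwiseSum T S :=
    ⟨{ toFun x := ∑ᶠ i, T i x
       map_add' x y := by simp only [map_add, finsum_add_distrib (hT x) (hT y)]
       map_smul' c x := by simp only [map_smul, RingHom.id_apply, smul_finsum' c (hT x)] },
      fun x => ⟨hT x, rfl⟩⟩
  rw [pointwiseSum, dif_pos h]
  exact h.choose_spec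

theorem finite_support_of_eventually {M : Type*} [Zero M] {f : ℤ → M}
    (hbot : ∀ᶠ i in atBot, f i = 0) (htop : ∀ᶠ i in atTop, f i = 0) :
    (Function.support f).Finite :=
  eventually_cofinite.1 (Int.cofinite_eq ▸ eventually_sup.2 ⟨hbot, htop⟩)

theorem hasPointwiseSum_sum {T : ι → V →ₗ[R] W} (s : Finset ι) (hT : ∀ i ∉ s, T i = 0) :
    HasPointwiseSum T (∑ i ∈ s, T i) := by
  intro x
  have hs : (Function.support fun i => T i x) ⊆ s := by
    intro i hi
    by_contra his
    exact hi (by simp [hT i his])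
  exact ⟨s.finite_toSet.subset hs, by
    rw [finsum_eq_sum_of_support_subset _ hs, LinearMap.sum_apply]⟩

theorem hasPointwiseSum_single {T : ι → V →ₗ[R] W} (k : ι) (hT : ∀ i, i ≠ k → T i = 0) :
    HasPointwiseSum T (T k) := by
  simpa using hasPointwiseSum_sum {k} (T := T) (by simpa using hT)

theorem hasPointwiseSum_indicator [DecidableEq ι] (s : Finset ι) (C : V →ₗ[R] W) :
    HasPointwiseSum (fun i => (if i ∈ s then 1 else 0 : R) • C) ((s.card : R) • C) := by
  convert hasPointwiseSum_sum s (T := fun i => (if i ∈ s then 1 else 0 : R) • C)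
    fun i hi => by rw [if_neg hi, zero_smul] using 1
  rw [← Finset.sum_smul, Finset.sum_boole, Finset.filter_mem_eq_inter, Finset.inter_self]

namespace HasPointwiseSum

variable {T T' : ι → V →ₗ[R] W} {S S' : V →ₗ[R] W}

theorem unique (h : HasPointwiseSum T S) (h' : HasPointwiseSum T S') : S = S' :=
  LinearMap.ext fun x => (h x).2.symm.trans (h' x).2

theorem add (h : HasPointwiseSum T S) (h' : HasPointwiseSum T' S') :
    HasPointwiseSum (fun i => T i + T' i) (S + S') := fun x =>
  ⟨((h x).1.union (h' x).1).subset (Function.support_add _ _), by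
    simp only [LinearMap.add_apply, finsum_add_distrib (h x).1 (h' x).1, (h x).2, (h' x).2]⟩

theorem linearMap_comp {U : Type*} [AddCommGroup U] [Module R U] (A : W →ₗ[R] U)
    (h : HasPointwiseSum T S) : HasPointwiseSum (fun i => A ∘ₗ T i) (A ∘ₗ S) := fun x =>
  ⟨(h x).1.subset (Function.support_comp_subset A.map_zero _), by
    simpa [(h x).2] using ((A : W →+ U).map_finsum (h x).1).symm⟩

theorem comp_linearMap {U : Type*} [AddCommGroup U] [Module R U] (A : U →ₗ[R] V)
    (h : HasPointwiseSum T S) : HasPointwiseSum (fun i => T i ∘ₗ A) (S ∘ₗ A) :=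
  fun x => h (A x)

theorem const_smul (c : R) (h : HasPointwiseSum T S) :
    HasPointwiseSum (fun i => c • T i) (c • S) :=
  h.linearMap_comp (LinearMap.lsmul R W c)

theorem neg (h : HasPointwiseSum T S) : HasPointwiseSum (fun i => -T i) (-S) := by
  simpa using h.const_smul (-1)

theorem sub (h : HasPointwiseSum T S) (h' : HasPointwiseSum T' S') :
    HasPointwiseSum (fun i => T i - T' i) (S - S') := by
  simpa only [sub_eq_add_neg] using h.add h'.neg

theorem comp_equiv (e : κ ≃ ι) (h : HasPointwiseSum T S) :
    HasPointwiseSum (fun k => T (e k)) S := fun x =>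
  ⟨(h x).1.preimage e.injective.injOn, by
    rw [finsum_comp_equiv e (f := fun i => T i x), (h x).2]⟩

theorem exists_smul (c : ι → R) (h : HasPointwiseSum T S) :
    ∃ S', HasPointwiseSum (fun i => c i • T i) S' :=
  ⟨_, hasPointwiseSum_pointwiseSum fun x =>
    (h x).1.subset (Function.support_smul_subset_right c fun i => T i x)⟩

theorem lie {T : ι → Module.End R V} {S : Module.End R V} (A : Module.End R V)
    (h : HasPointwiseSum T S) : HasPointwiseSum (fun i => ⁅A, T i⁆) ⁅A, S⁆ :=
  (h.linearMap_comp A).sub (h.comp_linearMap A)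

end HasPointwiseSum

end PointwiseSum

theorem tendsto_const_sub_atTop_atBot {G : Type*} [AddCommGroup G] [PartialOrder G]
    [IsOrderedAddMonoid G] (c : G) : Tendsto (fun x => c - x) atTop atBot := by
  simpa only [sub_eq_add_neg] using
    tendsto_atBot_add_const_left _ c tendsto_neg_atTop_atBot

theorem tendsto_const_sub_atBot_atTop {G : Type*} [AddCommGroup G] [PartialOrder G]
    [IsOrderedAddMonoid G] (c : G) : Tendsto (fun x => c - x) atBot atTop := by
  simpa only [sub_eq_add_neg] using
    tendsto_atTop_add_const_left _ c tendsto_neg_atBot_atTop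

section Heisenberg

theorem sum_range_mul_sub {K : Type*} [Field K] [CharZero K] (k l : ℕ) :
    ∑ t ∈ Finset.range l, (t : K) * (k - t) =
      k * (l * (l - 1) / 2) - (l - 1) * l * (2 * l - 1) / 6 := by
  induction l with
  | zero => simp
  | succ l ih =>
    rw [Finset.sum_range_succ, ih]
    push_cast
    field

theorem lie_mul_eq_lie_mul_add {A : Type*} [Ring A] (a b c : A) :
    ⁅a, b * c⁆ = ⁅a, b⁆ * c + b * ⁅a, c⁆ := by
  simp only [Ring.lie_def]
  noncomm_ring

theorem lie_smul_one {R A : Type*} [CommSemiring R] [Ring A] [Algebra R A] (a : A) (c : R) :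
    ⁅a, c • (1 : A)⁆ = 0 := by
  simp [Ring.lie_def]

/-- Operators `h n` satisfying the relations of the Heisenberg algebra at level `1`, with each
vector killed by `h n` for large `n`, so that normally ordered series are locally finite. -/
structure IsHeisenberg {R V : Type*} [CommRing R] [AddCommGroup V] [Module R V]
    (h : ℤ → Module.End R V) : Prop where
  lie_eq (m n : ℤ) : ⁅h m, h n⁆ = (if m + n = 0 then (m : R) else 0) • (1 : Module.End R V)
  eventually_eq_zero (x : V) : ∀ᶠ n in atTop, h n x = 0

/-- The bosonic normally ordered product `:h_j h_k:`. -/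
def bosonNormalOrder {A : Type*} [Mul A] (h : ℤ → A) (j k : ℤ) : A :=
  if j ≤ k then h j * h k else h k * h j

/-- The Sugawara operator `L_n = (1/2) ∑_j :h_j h_{n-j}:` of a Heisenberg family. -/
def sugawara {K V : Type*} [Field K] [AddCommGroup V] [Module K V]
    (h : ℤ → Module.End K V) (n : ℤ) : Module.End K V :=
  (1 / 2 : K) • pointwiseSum fun j => bosonNormalOrder h j (n - j)

namespace IsHeisenberg

section CommRing

variable {R V : Type*} [CommRing R] [AddCommGroup V] [Module R V] {h : ℤ → Module.End R V}

theorem finite_support_bosonNormalOrder (hh : IsHeisenberg h) (n : ℤ) (x : V) :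
    (Function.support fun j => bosonNormalOrder h j (n - j) x).Finite := by
  have hx := hh.eventually_eq_zero x
  apply finite_support_of_eventually
  · filter_upwards [(tendsto_const_sub_atBot_atTop n).eventually hx,
      (tendsto_const_sub_atBot_atTop n).eventually_ge_atTop 0, eventually_le_atBot 0]
      with j hj hnj hj0
    simp [bosonNormalOrder, hj0.trans hnj, hj]
  · filter_upwards [hx, (tendsto_const_sub_atTop_atBot n).eventually_lt_atBot 0,
      eventually_ge_atTop 0] with j hj hnj hj0
    simp [bosonNormalOrder, (hnj.trans_le hj0).not_ge, hj]

theorem bosonNormalOrder_eq (hh : IsHeisenberg h) (j k : ℤ) :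
    bosonNormalOrder h j k =
      h j * h k - (if j + k = 0 then ((max j 0 : ℤ) : R) else 0) • (1 : Module.End R V) := by
  have hlie : h j * h k - h k * h j = _ := hh.lie_eq j k
  unfold bosonNormalOrder
  split_ifs at hlie ⊢ with hjk h0
  · simp [max_eq_right (by omega : j ≤ 0)]
  · simp
  · rw [max_eq_left (by omega : 0 ≤ j), ← hlie, sub_sub_cancel]
  · rw [← hlie, sub_sub_cancel]

theorem lie_bosonNormalOrder (hh : IsHeisenberg h) (k j n : ℤ) :
    ⁅h k, bosonNormalOrder h j (n - j)⁆ =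
      (if k + j = 0 then (k : R) else 0) • h (n - j) +
        (if k + (n - j) = 0 then (k : R) else 0) • h j := by
  rw [hh.bosonNormalOrder_eq, lie_sub, lie_smul_one, sub_zero, lie_mul_eq_lie_mul_add, hh.lie_eq,
    hh.lie_eq, smul_one_mul, mul_smul_one]

end CommRing

variable {K V : Type*} [Field K] [CharZero K] [AddCommGroup V] [Module K V]
  {h : ℤ → Module.End K V}

theorem hasPointwiseSum_bosonNormalOrder (hh : IsHeisenberg h) (n : ℤ) :
    HasPointwiseSum (fun j => bosonNormalOrder h j (n - j)) ((2 : K) • sugawara h n) := by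
  rw [sugawara, smul_smul, mul_one_div_cancel two_ne_zero, one_smul]
  exact hasPointwiseSum_pointwiseSum (hh.finite_support_bosonNormalOrder n)

theorem lie_sugawara (hh : IsHeisenberg h) (k n : ℤ) :
    ⁅h k, sugawara h n⁆ = (k : K) • h (n + k) := by
  have hfirst : HasPointwiseSum (fun j => (if k + j = 0 then (k : K) else 0) • h (n - j))
      ((k : K) • h (n + k)) := by
    simpa using hasPointwiseSum_single
      (T := fun j => (if k + j = 0 then (k : K) else 0) • h (n - j)) (-k)
      fun j hj => by rw [if_neg (by omega), zero_smul]
  have hsecond : HasPointwiseSum (fun j => (if k + (n - j) = 0 then (k : K) else 0) • h j)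
      ((k : K) • h (n + k)) := by
    simpa using hasPointwiseSum_single
      (T := fun j => (if k + (n - j) = 0 then (k : K) else 0) • h j) (n + k)
      fun j hj => by rw [if_neg (by omega), zero_smul]
  have hlie := (hh.hasPointwiseSum_bosonNormalOrder n).lie (h k)
  simp only [hh.lie_bosonNormalOrder, lie_smul] at hlie
  have hsum := hlie.unique (hfirst.add hsecond)
  rw [← two_smul K] at hsum
  exact smul_right_injective _ two_ne_zero hsum

theorem sugawara_lie (hh : IsHeisenberg h) (n k : ℤ) :
    ⁅sugawara h n, h k⁆ = (-k : K) • h (n + k) := by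
  rw [← lie_skew, hh.lie_sugawara, neg_smul]

/-- The scalar terms come from restoring normal order; summed over `j` they are the Virasoro
cocycle. -/
theorem sugawara_lie_bosonNormalOrder (hh : IsHeisenberg h) (m n j : ℤ) :
    ⁅sugawara h m, bosonNormalOrder h j (n - j)⁆ =
      (m - (j + m : ℤ) : K) • bosonNormalOrder h (j + m) (m + n - (j + m)) +
        (j - n : K) • bosonNormalOrder h j (m + n - j) +
        (if m = -n then 1 else 0 : K) •
          ((((j + m) * max j 0 - j * max (j + m) 0 : ℤ) : K) • (1 : Module.End K V)) := by
  have hshift : m + n - (j + m) = n - j := by ring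
  rw [hh.bosonNormalOrder_eq j (n - j), lie_sub, lie_smul_one, sub_zero, lie_mul_eq_lie_mul_add,
    hh.sugawara_lie, hh.sugawara_lie, hh.bosonNormalOrder_eq, hh.bosonNormalOrder_eq, hshift,
    add_comm m j, smul_mul_assoc, mul_smul_comm, show m + (n - j) = m + n - j by ring]
  by_cases hmn : m = -n
  · rw [if_pos hmn, if_pos (by omega), if_pos (by omega), hmn]
    push_cast
    module
  · rw [if_neg hmn, if_neg (by omega), if_neg (by omega)]
    push_cast
    module

end IsHeisenberg

section Cocycle

variable {K V : Type*} [Field K] [CharZero K] [AddCommGroup V] [Module K V]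

theorem hasPointwiseSum_cocycle_natCast (k : ℕ) :
    HasPointwiseSum
      (fun j : ℤ => (((j + k) * max j 0 - j * max (j + k) 0 : ℤ) : K) • (1 : Module.End K V))
      ((((k : K) ^ 3 - k) / 6) • (1 : Module.End K V)) := by
  have hsum := hasPointwiseSum_sum (T := fun j : ℤ =>
    (((j + k) * max j 0 - j * max (j + k) 0 : ℤ) : K) • (1 : Module.End K V))
    ((Finset.range k).image fun t : ℕ => -(t : ℤ)) ?_
  · convert hsum
    rw [Finset.sum_image (by simp), ← Finset.sum_smul]
    congr 1
    calc ((k : K) ^ 3 - k) / 6 = ∑ t ∈ Finset.range k, (t : K) * (k - t) := by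
          rw [sum_range_mul_sub]; field
      _ = _ := Finset.sum_congr rfl fun t ht => by
          have htk := Finset.mem_range.1 ht
          rw [max_eq_right (by omega), max_eq_left (by omega)]
          push_cast; ring
  · intro j hj
    simp only [Finset.mem_image, Finset.mem_range, not_exists, not_and] at hj
    rcases le_or_gt j 0 with hj0 | hj0
    · have hjk : j + k ≤ 0 := by
        by_contra
        exact hj (-j).toNat (by omega) (by omega)
      simp [max_eq_right hj0, max_eq_right hjk]
    · rw [max_eq_left hj0.le, max_eq_left (by omega), mul_comm, sub_self, Int.cast_zero, zero_smul]

theorem hasPointwiseSum_cocycle (m : ℤ) :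
    HasPointwiseSum
      (fun j : ℤ => (((j + m) * max j 0 - j * max (j + m) 0 : ℤ) : K) • (1 : Module.End K V))
      ((((m : K) ^ 3 - m) / 6) • (1 : Module.End K V)) := by
  obtain ⟨k, rfl | rfl⟩ := m.eq_nat_or_neg
  · simpa using hasPointwiseSum_cocycle_natCast (K := K) (V := V) k
  · convert ((hasPointwiseSum_cocycle_natCast (K := K) (V := V) k).comp_equiv
      (Equiv.addRight (-k : ℤ))).neg using 1
    · ext1 j
      rw [Equiv.coe_addRight, neg_add_cancel_right, ← neg_smul]
      push_cast
      congr 1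
      ring
    · rw [← neg_smul]
      push_cast
      congr 1
      ring

end Cocycle

theorem IsHeisenberg.lie_sugawara_sugawara {K V : Type*} [Field K] [CharZero K] [AddCommGroup V]
    [Module K V] {h : ℤ → Module.End K V} (hh : IsHeisenberg h) (m n : ℤ) :
    ⁅sugawara h m, sugawara h n⁆ = ((m - n : ℤ) : K) • sugawara h (m + n) +
      (if m = -n then ((m ^ 3 - m : ℤ) : K) / 12 else 0) • (1 : Module.End K V) := by
  have hN := hh.hasPointwiseSum_bosonNormalOrder (m + n)
  obtain ⟨S, hS⟩ := hN.exists_smul fun j : ℤ => (m - j : K)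
  have hS' : HasPointwiseSum (fun j : ℤ => (j - n : K) • bosonNormalOrder h j (m + n - j))
      ((m - n : K) • (2 : K) • sugawara h (m + n) - S) := by
    convert (hN.const_smul (m - n : K)).sub hS using 2
    module
  have hlie := (hh.hasPointwiseSum_bosonNormalOrder n).lie (sugawara h m)
  simp only [hh.sugawara_lie_bosonNormalOrder, lie_smul] at hlie
  have hsum := hlie.unique (((hS.comp_equiv (Equiv.addRight m)).add hS').add
    ((hasPointwiseSum_cocycle m).const_smul _))
  apply smul_right_injective _ (two_ne_zero (α := K))
  simp only [hsum]
  split_ifs <;> push_cast <;> module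

end Heisenberg

section NeutralFermion

theorem lie_mul_eq_anticomm_mul_sub {A : Type*} [Ring A] (a b c : A) :
    ⁅a, b * c⁆ = (a * b + b * a) * c - b * (a * c + c * a) := by
  simp only [Ring.lie_def]
  noncomm_ring

theorem neg_one_zpow_add_two_mul {K : Type*} [DivisionRing K] (i n : ℤ) :
    (-1 : K) ^ (i + 2 * n) = (-1) ^ i := by
  rw [zpow_add₀ (by simp), zpow_mul]
  simp

theorem neg_one_zpow_neg {K : Type*} [DivisionRing K] (i : ℤ) : (-1 : K) ^ (-i) = (-1) ^ i := by
  rw [zpow_neg, ← inv_zpow]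
  simp

/-- Operators `a m` satisfying the anticommutation relations of the modes of a neutral fermion,
with each vector killed by `a m` for `m` sufficiently negative. -/
structure IsNeutralFermion {R V : Type*} [CommRing R] [AddCommGroup V] [Module R V]
    (a : ℤ → Module.End R V) : Prop where
  anticomm (i j : ℤ) :
    a i * a j + a j * a i = (if i + j = -1 then 1 else 0 : R) • (1 : Module.End R V)
  eventually_eq_zero (x : V) : ∀ᶠ m in atBot, a m x = 0

/-- The fermionic normally ordered product `:a_i a_j:`. -/
def fermionNormalOrder {A : Type*} [Ring A] (a : ℤ → A) (i j : ℤ) : A :=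
  if 0 ≤ i then a i * a j else -(a j * a i)

/-- The modes `h_n = (1/2) ∑_i (-1)^(i+1) :a_i a_{-2n-1-i}:` of the two-point local Heisenberg
field of a neutral fermion. -/
def fermionCurrent {K V : Type*} [Field K] [AddCommGroup V] [Module K V]
    (a : ℤ → Module.End K V) (n : ℤ) : Module.End K V :=
  (1 / 2 : K) • pointwiseSum fun i => (-1 : K) ^ (i + 1) • fermionNormalOrder a i (-2 * n - 1 - i)

namespace IsNeutralFermion

section CommRing

variable {R V : Type*} [CommRing R] [AddCommGroup V] [Module R V] {a : ℤ → Module.End R V}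

theorem fermionNormalOrder_eq (ha : IsNeutralFermion a) (i j : ℤ) :
    fermionNormalOrder a i j =
      a i * a j - (if i < 0 ∧ i + j = -1 then 1 else 0 : R) • (1 : Module.End R V) := by
  have hanti := ha.anticomm i j
  unfold fermionNormalOrder
  rcases le_or_gt 0 i with hi | hi
  · simp [hi, hi.not_gt]
  · simp only [hi.not_ge, hi, true_and, if_false, ← hanti]
    abel

theorem finite_support_fermionNormalOrder (ha : IsNeutralFermion a) (p : ℤ) (x : V) :
    (Function.support fun i => fermionNormalOrder a i (p - i) x).Finite := by
  have hx := ha.eventually_eq_zero x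
  apply finite_support_of_eventually
  · filter_upwards [hx, eventually_lt_atBot 0] with i hi hi0
    simp [fermionNormalOrder, hi0.not_ge, hi]
  · filter_upwards [(tendsto_const_sub_atTop_atBot p).eventually hx, eventually_ge_atTop 0]
      with i hi hi0
    simp [fermionNormalOrder, hi0, hi]

/-- One of `i` and `p - i` is at most `p / 2`, and the two modes anticommute once `p ≠ -1`. -/
theorem eventually_forall_fermionNormalOrder_eq_zero (ha : IsNeutralFermion a) (x : V) :
    ∀ᶠ p in atBot, ∀ i, fermionNormalOrder a i (p - i) x = 0 := by
  obtain ⟨M, hM⟩ := eventually_atBot.1 (ha.eventually_eq_zero x)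
  filter_upwards [eventually_le_atBot (2 * M), eventually_lt_atBot (-1)] with p hpM hp i
  have hanti : a i (a (p - i) x) + a (p - i) (a i x) = 0 := by
    simpa [show p ≠ -1 by omega] using LinearMap.congr_fun (ha.anticomm i (p - i)) x
  have hone : a i x = 0 ∨ a (p - i) x = 0 := (le_or_gt i M).imp (hM i) fun hi => hM _ (by omega)
  have hboth : a i (a (p - i) x) = 0 ∧ a (p - i) (a i x) = 0 := by
    rcases hone with h0 | h0 <;> simpa [h0] using hanti
  unfold fermionNormalOrder
  split_ifs <;> simp [hboth]

theorem lie_fermionNormalOrder (ha : IsNeutralFermion a) (k i j : ℤ) :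
    ⁅a k, fermionNormalOrder a i j⁆ =
      (if k + i = -1 then 1 else 0 : R) • a j - (if k + j = -1 then 1 else 0 : R) • a i := by
  rw [ha.fermionNormalOrder_eq, lie_sub, lie_smul_one, sub_zero, lie_mul_eq_anticomm_mul_sub,
    ha.anticomm, ha.anticomm, smul_one_mul, mul_smul_one]

end CommRing

variable {K V : Type*} [Field K] [CharZero K] [AddCommGroup V] [Module K V]
  {a : ℤ → Module.End K V}

theorem hasPointwiseSum_fermionNormalOrder (ha : IsNeutralFermion a) (n : ℤ) :
    HasPointwiseSum (fun i => (-1 : K) ^ (i + 1) • fermionNormalOrder a i (-2 * n - 1 - i))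
      ((2 : K) • fermionCurrent a n) := by
  rw [fermionCurrent, smul_smul, mul_one_div_cancel two_ne_zero, one_smul]
  exact hasPointwiseSum_pointwiseSum fun x =>
    (ha.finite_support_fermionNormalOrder (-2 * n - 1) x).subset
      (Function.support_smul_subset_right _ _)

theorem lie_fermionCurrent (ha : IsNeutralFermion a) (k n : ℤ) :
    ⁅a k, fermionCurrent a n⁆ = (-1 : K) ^ k • a (k - 2 * n) := by
  have hfirst : HasPointwiseSum
      (fun i => (-1 : K) ^ (i + 1) • (if k + i = -1 then 1 else 0 : K) • a (-2 * n - 1 - i))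
      ((-1 : K) ^ k • a (k - 2 * n)) := by
    convert hasPointwiseSum_single (T := fun i => (-1 : K) ^ (i + 1) •
      (if k + i = -1 then 1 else 0 : K) • a (-2 * n - 1 - i)) (-1 - k)
      fun i hi => by rw [if_neg (by omega), zero_smul, smul_zero] using 1
    rw [if_pos (by ring), one_smul, ← neg_one_zpow_neg]
    congr 2 <;> ring
  have hsecond : HasPointwiseSum
      (fun i => (-1 : K) ^ (i + 1) • (if k + (-2 * n - 1 - i) = -1 then 1 else 0 : K) • a i)
      (-((-1 : K) ^ k • a (k - 2 * n))) := by
    convert hasPointwiseSum_single (T := fun i => (-1 : K) ^ (i + 1) •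
      (if k + (-2 * n - 1 - i) = -1 then 1 else 0 : K) • a i) (k - 2 * n)
      fun i hi => by rw [if_neg (by omega), zero_smul, smul_zero] using 1
    rw [if_pos (by ring), one_smul, ← neg_smul, zpow_add_one₀ (by simp),
      show k - 2 * n = k + 2 * (-n) by ring, neg_one_zpow_add_two_mul, mul_neg_one]
  have hlie := (ha.hasPointwiseSum_fermionNormalOrder n).lie (a k)
  simp only [lie_smul, ha.lie_fermionNormalOrder, smul_sub] at hlie
  have hsum := hlie.unique (hfirst.sub hsecond)
  rw [sub_neg_eq_add, ← two_smul K] at hsum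
  exact smul_right_injective _ two_ne_zero hsum

theorem fermionCurrent_lie (ha : IsNeutralFermion a) (n k : ℤ) :
    ⁅fermionCurrent a n, a k⁆ = (-1 : K) ^ (k + 1) • a (k - 2 * n) := by
  rw [← lie_skew, ha.lie_fermionCurrent, ← neg_smul, zpow_add_one₀ (by simp), mul_neg_one]

/-- Without the normal ordering the right-hand side would be a difference of two translates of the
same family; the scalar term is what restoring the normal order leaves behind. -/
theorem fermionCurrent_lie_fermionNormalOrder (ha : IsNeutralFermion a) (m n i : ℤ) :
    ⁅fermionCurrent a m, (-1 : K) ^ (i + 1) • fermionNormalOrder a i (-2 * n - 1 - i)⁆ =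
      fermionNormalOrder a (i - 2 * m) (-2 * (m + n) - 1 - (i - 2 * m)) -
        fermionNormalOrder a i (-2 * (m + n) - 1 - i) +
        (if m + n = 0 then 1 else 0 : K) •
          ((if i < 2 * m then 1 else 0) - (if i < 0 then 1 else 0) : K) •
            (1 : Module.End K V) := by
  have hsign : (-1 : K) ^ (-2 * n - 1 - i + 1) = (-1) ^ i := by
    rw [show -2 * n - 1 - i + 1 = -i + 2 * (-n) by ring, neg_one_zpow_add_two_mul, neg_one_zpow_neg]
  have hsq : (-1 : K) ^ i * (-1) ^ i = 1 := by rw [← mul_zpow]; simp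
  rw [lie_smul, ha.fermionNormalOrder_eq i (-2 * n - 1 - i), lie_sub, lie_smul_one, sub_zero,
    lie_mul_eq_lie_mul_add, ha.fermionCurrent_lie, ha.fermionCurrent_lie, hsign,
    ha.fermionNormalOrder_eq, ha.fermionNormalOrder_eq, smul_mul_assoc, mul_smul_comm, smul_add,
    smul_smul, smul_smul, zpow_add_one₀ (by simp : (-1 : K) ≠ 0)]
  have hleft : (-1 : K) ^ i * -1 * ((-1) ^ i * -1) = 1 := by linear_combination hsq
  have hright : (-1 : K) ^ i * -1 * (-1) ^ i = -1 := by linear_combination -hsq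
  rw [hleft, hright, show -2 * (m + n) - 1 - (i - 2 * m) = -2 * n - 1 - i by ring,
    show -2 * (m + n) - 1 - i = -2 * n - 1 - i - 2 * m by ring]
  have hfst : (i - 2 * m < 0 ∧ i - 2 * m + (-2 * n - 1 - i) = -1) ↔ i < 2 * m ∧ m + n = 0 := by
    omega
  have hsnd : (i < 0 ∧ i + (-2 * n - 1 - i - 2 * m) = -1) ↔ i < 0 ∧ m + n = 0 := by omega
  simp only [hfst, hsnd, ite_and]
  split_ifs <;> module

end IsNeutralFermion

theorem hasPointwiseSum_indicator_lt_sub {R V W : Type*} [CommRing R] [AddCommGroup V] [Module R V]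
    [AddCommGroup W] [Module R W] (k : ℤ) (C : V →ₗ[R] W) :
    HasPointwiseSum (fun i => ((if i < k then 1 else 0) - (if i < 0 then 1 else 0) : R) • C)
      ((k : R) • C) := by
  convert (hasPointwiseSum_indicator (Finset.Ico 0 k) C).sub
    (hasPointwiseSum_indicator (Finset.Ico k 0) C) using 1
  · ext1 i
    rw [← sub_smul]
    simp only [Finset.mem_Ico]
    split_ifs <;> first | omega | simp
  · rw [← sub_smul, Int.card_Ico, Int.card_Ico, sub_zero, zero_sub]
    conv_lhs => rw [← Int.toNat_sub_toNat_neg k]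
    push_cast
    rfl

theorem IsNeutralFermion.isHeisenberg_fermionCurrent {K V : Type*} [Field K] [CharZero K]
    [AddCommGroup V] [Module K V] {a : ℤ → Module.End K V} (ha : IsNeutralFermion a) :
    IsHeisenberg (fermionCurrent a) where
  lie_eq m n := by
    have hlie := (ha.hasPointwiseSum_fermionNormalOrder n).lie (fermionCurrent a m)
    simp only [ha.fermionCurrent_lie_fermionNormalOrder] at hlie
    have hN := hasPointwiseSum_pointwiseSum
      (ha.finite_support_fermionNormalOrder (-2 * (m + n) - 1))
    have hsum := hlie.unique (((hN.comp_equiv (Equiv.subRight (2 * m))).sub hN).add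
      ((hasPointwiseSum_indicator_lt_sub (2 * m) 1).const_smul _))
    apply smul_right_injective _ (two_ne_zero (α := K))
    simp only [← lie_smul, hsum, sub_self, zero_add]
    split_ifs <;> push_cast <;> module
  eventually_eq_zero x := by
    obtain ⟨M, hM⟩ := eventually_atBot.1 (ha.eventually_forall_fermionNormalOrder_eq_zero x)
    filter_upwards [eventually_ge_atTop (-M), eventually_ge_atTop 0] with n hnM hn0
    have hn := hM (-2 * n - 1) (by omega)
    have hsum := (ha.hasPointwiseSum_fermionNormalOrder n x).2
    simp only [LinearMap.smul_apply, hn, smul_zero, finsum_zero] at hsum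
    exact (smul_eq_zero.1 hsum.symm).resolve_left two_ne_zero

end NeutralFermion

section FockSpace

open scoped symmDiff

/-- The position `t` that the mode `a_m` fills (if `m = t`) or empties (if `m = -t-1`). -/
def fermionSite (m : ℤ) : ℕ :=
  (max m (-m - 1)).toNat

/-- The sign `(-1)^#{s ∈ S : s > t}` picked up by a fermion moved to or from position `t`. -/
def fermionSign (t : ℕ) (S : Finset ℕ) : ℂ :=
  ∏ s ∈ S, if t < s then -1 else 1

theorem symmDiff_singleton_of_notMem {α : Type*} [DecidableEq α] {S : Finset α} {t : α}
    (ht : t ∉ S) : S ∆ {t} = insert t S := by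
  grind [Finset.mem_symmDiff]

theorem symmDiff_singleton_of_mem {α : Type*} [DecidableEq α] {S : Finset α} {t : α}
    (ht : t ∈ S) : S ∆ {t} = S.erase t := by
  grind [Finset.mem_symmDiff]

theorem neg_one_pow_card_filter_lt (t : ℕ) (S : Finset ℕ) :
    (-1 : ℂ) ^ (S.filter fun s => t < s).card = fermionSign t S := by
  rw [fermionSign, Finset.prod_ite, Finset.prod_const, Finset.prod_const_one, mul_one]

theorem fermionSign_mul_self (t : ℕ) (S : Finset ℕ) : fermionSign t S * fermionSign t S = 1 := by
  rw [← neg_one_pow_card_filter_lt, ← mul_pow]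
  simp

theorem fermionSign_symmDiff_singleton (t u : ℕ) (S : Finset ℕ) :
    fermionSign t (S ∆ {u}) = (if t < u then -1 else 1) * fermionSign t S := by
  by_cases hu : u ∈ S
  · rw [symmDiff_singleton_of_mem hu, fermionSign, fermionSign, ← Finset.mul_prod_erase S _ hu]
    split_ifs <;> ring
  · rw [symmDiff_singleton_of_notMem hu, fermionSign, fermionSign, Finset.prod_insert hu]

theorem aOp_eD (m : ℤ) (S : Finset ℕ) :
    aOp m (eD S) = if fermionSite m ∈ S ↔ m < 0 then
      fermionSign (fermionSite m) S • eD (S ∆ {fermionSite m}) else 0 := by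
  have haVec : aOp m (eD S) = aVec m S := by simp [aOp, eD]
  simp only [haVec, aVec, neg_one_pow_card_filter_lt]
  rcases le_or_gt 0 m with hm | hm
  · rw [show fermionSite m = m.toNat by rw [fermionSite, max_eq_left (by omega)], if_pos hm]
    by_cases hS : m.toNat ∈ S
    · rw [if_pos hS, if_neg (by simp [hS, hm])]
    · rw [if_neg hS, if_pos (by simp [hS, hm]), symmDiff_singleton_of_notMem hS]
  · rw [show fermionSite m = (-m - 1).toNat by rw [fermionSite, max_eq_right (by omega)],
      if_neg hm.not_ge]
    by_cases hS : (-m - 1).toNat ∈ S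
    · rw [if_pos hS, if_pos (iff_of_true hS hm), symmDiff_singleton_of_mem hS]
    · rw [if_neg hS, if_neg fun h => hS (h.2 hm)]

theorem aOp_aOp_eD (i j : ℤ) (S : Finset ℕ) :
    aOp i (aOp j (eD S)) =
      if (fermionSite j ∈ S ↔ j < 0) ∧ (fermionSite i ∈ S ∆ {fermionSite j} ↔ i < 0) then
        (fermionSign (fermionSite j) S * fermionSign (fermionSite i) (S ∆ {fermionSite j})) •
          eD (S ∆ {fermionSite j} ∆ {fermionSite i}) else 0 := by
  rw [aOp_eD, apply_ite (aOp i), map_smul, map_zero, aOp_eD, smul_ite, smul_zero, smul_smul,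
    ite_and]

theorem aOp_anticomm_eD_of_site_ne {i j : ℤ} (hij : fermionSite i ≠ fermionSite j)
    (S : Finset ℕ) : aOp i (aOp j (eD S)) + aOp j (aOp i (eD S)) = 0 := by
  have hi : fermionSite i ∈ S ∆ {fermionSite j} ↔ fermionSite i ∈ S := by
    simp [Finset.mem_symmDiff, hij]
  have hj : fermionSite j ∈ S ∆ {fermionSite i} ↔ fermionSite j ∈ S := by
    simp [Finset.mem_symmDiff, hij.symm]
  have hsign : ((if fermionSite i < fermionSite j then -1 else 1) +
      if fermionSite j < fermionSite i then -1 else 1 : ℂ) = 0 := by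
    rcases hij.lt_or_gt with h | h <;> simp [h, h.not_gt]
  simp only [aOp_aOp_eD, hi, hj, and_comm (a := fermionSite i ∈ S ↔ i < 0),
    symmDiff_right_comm S {fermionSite i}, fermionSign_symmDiff_singleton]
  rw [← ite_add_zero, ← add_smul, ite_eq_right_iff]
  refine fun _ => smul_eq_zero_of_left ?_ _
  linear_combination fermionSign (fermionSite i) S * fermionSign (fermionSite j) S * hsign

theorem aOp_aOp_eD_of_site_eq {i j : ℤ} (hij : fermionSite i = fermionSite j) (S : Finset ℕ) :
    aOp i (aOp j (eD S)) =
      if (fermionSite j ∈ S ↔ j < 0) ∧ ¬(i < 0 ↔ j < 0) then eD S else 0 := by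
  rw [aOp_aOp_eD, hij, fermionSign_symmDiff_singleton, if_neg (lt_irrefl _), one_mul,
    fermionSign_mul_self, one_smul, symmDiff_symmDiff_cancel_right]
  refine if_congr ?_ rfl rfl
  simp only [Finset.mem_symmDiff, Finset.mem_singleton]
  tauto

theorem aOp_anticomm_eD (i j : ℤ) (S : Finset ℕ) :
    aOp i (aOp j (eD S)) + aOp j (aOp i (eD S)) = if i + j = -1 then eD S else 0 := by
  by_cases hij : fermionSite i = fermionSite j
  · rw [aOp_aOp_eD_of_site_eq hij, aOp_aOp_eD_of_site_eq hij.symm, hij]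
    have hsum : i + j = -1 ↔ ¬(i < 0 ↔ j < 0) := by
      simp only [fermionSite] at hij
      omega
    simp only [hsum]
    by_cases hS : fermionSite j ∈ S <;> by_cases hi : i < 0 <;> by_cases hj : j < 0 <;>
      simp [hS, hi, hj]
  · rw [aOp_anticomm_eD_of_site_ne hij, if_neg fun h => hij ?_]
    rw [show j = -i - 1 by omega, fermionSite, fermionSite, max_comm]
    congr 2
    ring

theorem eventually_aOp_eq_zero (x : FockD) : ∀ᶠ m in atBot, aOp m x = 0 := by
  induction x using Finsupp.induction_linear with
  | zero => simp
  | add x y hx hy => filter_upwards [hx, hy] with m hmx hmy; simp [hmx, hmy]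
  | single S c =>
    filter_upwards [eventually_lt_atBot (-(S.sup id : ℕ) - 1 : ℤ)] with m hm
    have hS : fermionSite m ∉ S := fun h => by
      have := Finset.le_sup (f := id) h
      simp only [fermionSite, id] at this hm
      omega
    rw [← mul_one c, ← smul_eq_mul, ← Finsupp.smul_single, map_smul, ← eD, aOp_eD,
      if_neg (by simp [hS]; omega), smul_zero]

theorem isNeutralFermion_aOp : IsNeutralFermion aOp where
  anticomm i j := by
    refine Finsupp.lhom_ext' fun S => LinearMap.ext_ring ?_
    by_cases hij : i + j = -1 <;> simpa [eD, hij] using aOp_anticomm_eD i j S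
  eventually_eq_zero := eventually_aOp_eq_zero

theorem hD_eq_fermionCurrent (n : ℤ) (x : FockD) : hD n x = fermionCurrent aOp n x := by
  rw [hD, show (∑ᶠ i : ℤ, ((-1 : ℂ) ^ (i + 1)) • NO i (-2 * n - 1 - i) x) = _ from
    (isNeutralFermion_aOp.hasPointwiseSum_fermionNormalOrder n x).2, LinearMap.smul_apply,
    smul_smul, one_div_mul_cancel two_ne_zero, one_smul]

theorem L1D_eq_sugawara (n : ℤ) (x : FockD) : L1D n x = sugawara (fermionCurrent aOp) n x := by
  have hsum := (isNeutralFermion_aOp.isHeisenberg_fermionCurrent.hasPointwiseSum_bosonNormalOrder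
    n x).2
  simp only [bosonNormalOrder, apply_ite (fun T : Module.End ℂ FockD => T x),
    Module.End.mul_apply, LinearMap.smul_apply] at hsum
  simp only [L1D, hD_eq_fermionCurrent]
  rw [hsum, smul_smul, one_div_mul_cancel two_ne_zero, one_smul]

end FockSpace

theorem virasoro_charge_one_general {K V : Type*} [Field K] [CharZero K] [AddCommGroup V]
    [Module K V] {a : ℤ → Module.End K V} (ha : IsNeutralFermion a) (m n : ℤ) :
    ⁅sugawara (fermionCurrent a) m, sugawara (fermionCurrent a) n⁆ =
      ((m - n : ℤ) : K) • sugawara (fermionCurrent a) (m + n) +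
        (if m = -n then ((m ^ 3 - m : ℤ) : K) / 12 else 0) • (1 : Module.End K V) :=
  ha.isHeisenberg_fermionCurrent.lie_sugawara_sugawara m n

/-- The operators `L¹_n = (1/2) ∑_j :h_j h_{n−j}:` on the neutral fermion Fock space satisfy
the Virasoro relations with central charge `1`. -/
theorem virasoro_charge_one (m n : ℤ) (x : FockD) :
    L1D m (L1D n x) - L1D n (L1D m x)
      = ((m - n : ℤ) : ℂ) • L1D (m + n) x
        + (if m = -n then ((m ^ 3 - m : ℤ) : ℂ) / 12 else 0) • x := by
  simp only [L1D_eq_sugawara]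
  exact LinearMap.congr_fun (virasoro_charge_one_general isNeutralFermion_aOp m n) x
end
end
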